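/- There exists ε₀ ≥ π/180 such that: for every triangle T each of whose three angles differs from π/3 by at most ε₀/2, and for every ε with 0 < ε < ε₀/2, one has h(n, T, ε) = h(n) for every natural number n. In particular, h(n, T, ε) = (n³ − n)/24 when n is a power of 3. -/

import Mathlib

open EuclideanGeometry

noncomputable section

abbrev Plane := EuclideanSpace ℝ (Fin 2)

/-- A triple of points is a (non-degenerate) triangle if its points are not collinear. -/
def IsTriangle (p : Fin 3 → Plane) : Prop := ¬ Collinear ℝ (Set.range p)

/-- The angle of the triple `p` at its `i`-th vertex. -/
noncomputable def triAngle (p : Fin 3 → Plane) (i : Fin 3) : ℝ :=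
  EuclideanGeometry.angle (p (i + 1)) (p i) (p (i + 2))

/-- `p` is ε-similar to `T`: some correspondence of vertices makes corresponding
angles differ by less than ε. -/
def EpsSimilar (ε : ℝ) (p T : Fin 3 → Plane) : Prop :=
  ∃ σ : Equiv.Perm (Fin 3), ∀ i, |triAngle p i - triAngle T (σ i)| < ε

/-- The finite set `S` forms a triangle ε-similar to `T`. -/
def FormsSimilar (ε : ℝ) (T : Fin 3 → Plane) (S : Finset Plane) : Prop :=
  ∃ p : Fin 3 → Plane, (S : Set Plane) = Set.range p ∧ IsTriangle p ∧ EpsSimilar ε p T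

/-- The number of 3-element subsets of `P` forming a triangle ε-similar to `T`. -/
noncomputable def simCount (ε : ℝ) (T : Fin 3 → Plane) (P : Finset Plane) : ℕ :=
  Set.ncard {S : Finset Plane | S ⊆ P ∧ S.card = 3 ∧ FormsSimilar ε T S}

/-- `hGeo n T ε` = maximum over `n`-point sets `P` of the number of 3-element
subsets of `P` forming a triangle ε-similar to `T`. -/
noncomputable def hGeo (n : ℕ) (T : Fin 3 → Plane) (ε : ℝ) : ℕ :=
  sSup {m | ∃ P : Finset Plane, P.card = n ∧ simCount ε T P = m}

/-- The recurrence defining the sequence `h`. -/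
def HRec (h : ℕ → ℕ) : Prop :=
  h 0 = 0 ∧ h 1 = 0 ∧ h 2 = 0 ∧
  ∀ n, 3 ≤ n → IsGreatest
    {m | ∃ a b c : ℕ, a + b + c = n ∧ a ≤ n - 1 ∧ b ≤ n - 1 ∧ c ≤ n - 1 ∧
      m = a * b * c + h a + h b + h c} (h n)


def NR (w x y z : ℂ) : Prop :=
  ‖z - x - w * (y - x)‖ ≤ 0.028 * ‖y - x‖ ∨ ‖z - x - (1 - w) * (y - x)‖ ≤ 0.028 * ‖y - x‖

def boxA (x Y : ℝ) : Prop :=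
  -0.0568 ≤ 3 * x + Y ∧ 3 * x + Y ≤ 1.018 ∧ -0.0568 ≤ x - Y ∧ x - Y ≤ 0.1152

def boxC (x Y : ℝ) : Prop :=
  -0.0576 ≤ x ∧ x ≤ 0.0576 ∧ -0.588 ≤ Y ∧ Y ≤ 0

def inA (w p : ℂ) : Prop := boxA p.re (2 * w.im * p.im)
def inB (w p : ℂ) : Prop := boxA (1 - p.re) (2 * w.im * p.im)
def inC (w p : ℂ) : Prop := boxC (p.re - 1/2) (2 * w.im * p.im - 3/2)

lemma boxA_of (x Y N : ℝ) (hN : N = x^2 + Y^2/3) (h1 : N + x - Y ≤ 0.1152) (h2 : N - x + Y ≤ 0.0568)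
    (h3 : N ≤ 2 * x) (h4 : N - x - Y ≤ 0.0568) : boxA x Y := by
  have hN0 : 0 ≤ N := by rw [hN]; positivity
  refine ⟨by linarith, ?_, by linarith, by linarith⟩
  have : (3 * x + Y)^2 ≤ 12 * N := by nlinarith [sq_nonneg (x - Y)]
  nlinarith

lemma boxC_of (x Y N : ℝ) (hN : N = x^2 + Y^2/3) (h1 : N + 2 * x ≤ 0.1152) (h2 : N - 2 * x ≤ 0.1152)
    (h3 : N + x + Y ≤ 0) (h4 : N - x + Y ≤ 0) : boxC x Y := by
  have hN0 : 0 ≤ N := by rw [hN]; positivity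
  refine ⟨by linarith, by linarith, ?_, by linarith⟩
  have : Y^2 ≤ 0.3456 := by nlinarith [sq_nonneg x]
  nlinarith

lemma norm_le_sq (z : ℂ) (r : ℝ) (h : ‖z‖ ≤ r) : z.re^2 + z.im^2 ≤ r^2 := by
  have h2 : ‖z‖^2 = z.re^2+z.im^2 := by
    rw [Complex.sq_norm, Complex.normSq_apply]; ring
  rw [← h2]; gcongr

lemma w_mul {w : ℂ} (hre : w.re = 1/2) (him : w.im^2 = 3/4) : w * (1 - w) = 1 := by
  apply Complex.ext
  · simp [hre]; nlinarith
  · simp [hre]; ring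

lemma w_norm {w : ℂ} (hre : w.re = 1/2) (him : w.im^2 = 3/4) : ‖w‖ = 1 := by
  have h2 : ‖w‖^2 = 1 := by
    rw [Complex.sq_norm, Complex.normSq_apply, hre]; nlinarith
  nlinarith [norm_nonneg w]

lemma w_norm' {w : ℂ} (hre : w.re = 1/2) (him : w.im^2 = 3/4) : ‖1 - w‖ = 1 :=
  w_norm (by simp [hre]; norm_num) (by simpa using him)

/-- if `q ≈ e`, `‖q - o‖ ≤ 1`, `e - o ≈ v * (p - k)` then `‖p - k‖` is small. -/
lemma approx_aux {q e o v p k : ℂ} {a b : ℝ} (hv : ‖v‖ = 1) (hqe : ‖q - e‖ ≤ a) (hqo : ‖q - o‖ ≤ 1)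
    (hb : ‖e - o - v * (p - k)‖ ≤ b) : ‖p - k‖ ≤ 1 + a + b := by
  have h1 : ‖p - k‖ = ‖v * (p - k)‖ := by rw [norm_mul, hv, one_mul]
  rw [h1]
  have : v * (p - k) = (q - o) - (q - e) - (e - o - v * (p - k)) := by ring
  rw [this]
  calc _ ≤ ‖(q - o) - (q - e)‖ + ‖e - o - v * (p - k)‖ := norm_sub_le _ _
    _ ≤ ‖q - o‖ + ‖q - e‖ + ‖e - o - v * (p - k)‖ := by gcongr; exact norm_sub_le _ _
    _ ≤ _ := by linarith

lemma cluster {w c p q1 q2 q3 : ℂ} (hre : w.re = 1/2) (him : w.im^2 = 3/4)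
    (hc : ‖c - w‖ ≤ 0.028)
    (p0 : ‖p‖ ≤ 1) (p1 : ‖p - 1‖ ≤ 1) (pc : ‖p - c‖ ≤ 1)
    (q11 : ‖q1 - 1‖ ≤ 1) (q1c : ‖q1 - c‖ ≤ 1)
    (q20 : ‖q2‖ ≤ 1) (q2c : ‖q2 - c‖ ≤ 1)
    (q30 : ‖q3‖ ≤ 1) (q31 : ‖q3 - 1‖ ≤ 1)
    (r1 : NR w 0 p q1) (r2 : NR w 1 p q2) (r3 : NR w c p q3) :
    inA w p ∨ inB w p ∨ inC w p := by
  have hw := w_mul hre him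
  have n1 := w_norm hre him
  have n2 := w_norm' hre him
  have ha : ‖p - (w - 1)‖ ≤ 1.056 ∨ ‖p - (1 - w)‖ ≤ 1.028 := by
    rcases r1 with r | r
    · right
      have := approx_aux (e := w * p) (o := 1) (k := 1 - w) (b := 0) (a := 0.028) n1
        (by simp at r ⊢; linarith) q11 (by
          rw [show w * p - 1 - w * (p - (1 - w)) = w * (1 - w) - 1 by ring, hw]; simp)
      linarith
    · left
      have := approx_aux (e := (1 - w) * p) (o := c) (k := w - 1) (b := 0.028) (a := 0.028) n2
        (by simp at r ⊢; linarith) q1c (by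
          rw [show (1 - w) * p - c - (1 - w) * (p - (w - 1)) = -(c - w) + (w * (1 - w) - 1) by ring, hw]
          simpa [norm_sub_rev] using hc)
      linarith
  have hb : ‖p - (1 + w)‖ ≤ 1.056 ∨ ‖p - (1 - w)‖ ≤ 1.028 := by
    rcases r2 with r | r
    · left
      have := approx_aux (q := q2) (e := 1 + w * (p - 1)) (o := c) (k := 1 + w) (b := 0.028) (a := 0.028) n1
        (by rw [← sub_sub]; linarith) q2c (by
          rw [show 1 + w * (p - 1) - c - w * (p - (1 + w)) = -(c - w) + (1 - w * (1 - w)) by ring, hw]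
          simpa [norm_sub_rev] using hc)
      linarith
    · right
      have := approx_aux (q := q2) (e := 1 + (1 - w) * (p - 1)) (o := 0) (k := 1 - w) (b := 0) (a := 0.028) n2
        (by rw [← sub_sub]; linarith) (by simpa using q20) (by
          rw [show 1 + (1 - w) * (p - 1) - 0 - (1 - w) * (p - (1 - w)) = 1 - w * (1 - w) by ring, hw]
          simp)
      linarith
  have hc' : ‖p - (1 + w)‖ ≤ 1.056 ∨ ‖p - (w - 1)‖ ≤ 1.056 := by
    rcases r3 with r | r
    · right
      have := approx_aux (q := q3) (e := c + w * (p - c)) (o := 0) (k := w - 1) (b := 0.028) (a := 0.028) n1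
        (by rw [← sub_sub]; linarith) (by simpa using q30) (by
          rw [show c + w * (p - c) - 0 - w * (p - (w - 1)) = (1 - w) * (c - w)  by ring, norm_mul, n2]
          linarith)
      linarith
    · left
      have := approx_aux (q := q3) (e := c + (1 - w) * (p - c)) (o := 1) (k := 1 + w) (b := 0.028) (a := 0.028) n2
        (by rw [← sub_sub]; linarith) q31 (by
          rw [show c + (1 - w) * (p - c) - 1 - (1 - w) * (p - (1 + w)) = w * (c - w)  by ring, norm_mul, n1]
          linarith)
      linarith
  have pw : ‖p - w‖ ≤ 1.028 := by
    calc _ = ‖(p - c) + (c - w)‖ := by ring_nf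
      _ ≤ _ := norm_add_le _ _
      _ ≤ _ := by linarith
  have e0 := norm_le_sq _ _ p0
  have e1 := norm_le_sq _ _ p1
  have ew := norm_le_sq _ _ pw
  simp [hre] at e0 e1 ew
  have key : (2 * w.im * p.im)^2 = 3 * p.im^2 := by
    calc _ = 4 * w.im^2 * p.im^2 := by ring
      _ = _ := by rw [him]; ring
  have k2 : w.im * w.im = 3/4 := by rw [← him]; ring
  have caseA : ‖p - (w - 1)‖ ≤ 1.056 → ‖p - (1 - w)‖ ≤ 1.028 → inA w p := by
    intro h1 h2
    have h1 := norm_le_sq _ _ h1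
    have h2 := norm_le_sq _ _ h2
    simp [hre] at h1 h2
    apply boxA_of _ _ (p.re^2 + p.im^2) (by rw [key]; ring) <;> linarith
  have caseB : ‖p - (1 + w)‖ ≤ 1.056 → ‖p - (1 - w)‖ ≤ 1.028 → inB w p := by
    intro h1 h2
    have h1 := norm_le_sq _ _ h1
    have h2 := norm_le_sq _ _ h2
    simp [hre] at h1 h2
    apply boxA_of _ _ ((1 - p.re)^2 + p.im^2) (by rw [key]; ring) <;> linarith
  have caseC : ‖p - (1 + w)‖ ≤ 1.056 → ‖p - (w - 1)‖ ≤ 1.056 → inC w p := by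
    intro h1 h2
    have h1 := norm_le_sq _ _ h1
    have h2 := norm_le_sq _ _ h2
    simp [hre] at h1 h2
    apply boxC_of _ _ ((p.re - 1/2)^2 + (p.im - w.im)^2) (by linarith [key]) <;> linarith
  tauto

/-- far pair versus near pair -/
lemma far_near {w x y z : ℂ} (hre : w.re = 1/2) (him : w.im^2 = 3/4) (h : NR w x y z) :
    ‖z - x‖ ≤ 1.028 * ‖y - x‖ := by
  have n1 := w_norm hre him
  have n2 := w_norm' hre him
  have : ∀ v : ℂ, ‖v‖ = 1 → ‖z - x - v * (y - x)‖ ≤ 0.028 * ‖y - x‖ → ‖z - x‖ ≤ 1.028 * ‖y - x‖ := by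
    intro v hv h
    calc ‖z - x‖ = ‖(z - x - v * (y - x)) + v * (y - x)‖ := by ring_nf
      _ ≤ _ := norm_add_le _ _
      _ ≤ _ := by rw [norm_mul, hv]; linarith
  rcases h with h | h
  · exact this _ n1 h
  · exact this _ n2 h

lemma dist_form (w z : ℂ) (him : w.im^2 = 3/4) : ‖z‖^2 = z.re^2 + (2 * w.im * z.im)^2/3 := by
  rw [Complex.sq_norm, Complex.normSq_apply, mul_pow, mul_pow, him]; ring

lemma far_near' {w x y z : ℂ} (hre : w.re = 1/2) (him : w.im^2 = 3/4) (h : NR w x y z) :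
    (z.re - x.re)^2 + (2 * w.im * z.im - 2 * w.im * x.im)^2/3 ≤
    1.057 * ((y.re - x.re)^2 + (2 * w.im * y.im - 2 * w.im * x.im)^2/3) := by
  have h1 := far_near hre him h
  have h2 : ‖z - x‖^2 ≤ (1.028 * ‖y - x‖)^2 := by gcongr
  rw [mul_pow, dist_form w _ him, dist_form w _ him] at h2
  simp only [Complex.sub_re, Complex.sub_im, mul_sub] at h2
  nlinarith [sq_nonneg (y.re - x.re), sq_nonneg (2 * w.im * y.im - 2 * w.im * x.im)]

lemma boxA_diam {x Y x' Y' : ℝ} (h : boxA x Y) (h' : boxA x' Y') :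
    (x' - x)^2 + (Y' - Y)^2/3 ≤ 0.1041 := by
  obtain ⟨a1, a2, a3, a4⟩ := h
  obtain ⟨b1, b2, b3, b4⟩ := h'
  have e1 : ((3 * x' + Y') - (3 * x + Y))^2 ≤ 1.0748^2 := by
    apply sq_le_sq' <;> linarith
  have e2 : ((x' - Y') - (x - Y))^2 ≤ 0.172^2 := by
    apply sq_le_sq' <;> linarith
  nlinarith

lemma boxC_diam {x Y x' Y' : ℝ} (h : boxC x Y) (h' : boxC x' Y') :
    (x' - x)^2 + (Y' - Y)^2/3 ≤ 0.1286 := by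
  obtain ⟨a1, a2, a3, a4⟩ := h
  obtain ⟨b1, b2, b3, b4⟩ := h'
  have e1 : (x' - x)^2 ≤ 0.1152^2 := by
    apply sq_le_sq' <;> linarith
  have e2 : (Y' - Y)^2 ≤ 0.588^2 := by
    apply sq_le_sq' <;> linarith
  nlinarith

lemma proj_sq (d e : ℝ) (h : 0.4 ≤ (d + e) / 2) : 0.16 ≤ d^2 + e^2/3 := by
  nlinarith [sq_nonneg (3 * d - e)]

lemma AB_far {x Y x' Y' : ℝ} (h : boxA x Y) (h' : boxA (1 - x') Y') :
    0.16 ≤ (x' - x)^2 + (Y' - Y)^2/3 := by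
  obtain ⟨a1, a2, a3, a4⟩ := h
  obtain ⟨b1, b2, b3, b4⟩ := h'
  have : 0.4 ≤ x' - x := by linarith
  nlinarith [sq_nonneg (Y' - Y)]

lemma AC_far {x Y x' Y' : ℝ} (h : boxA x Y) (h' : boxC (x' - 1/2) (Y' - 3/2)) :
    0.16 ≤ (x' - x)^2 + (Y' - Y)^2/3 := by
  obtain ⟨a1, a2, a3, a4⟩ := h
  obtain ⟨b1, b2, b3, b4⟩ := h'
  apply proj_sq
  linarith

lemma BC_far {x Y x' Y' : ℝ} (h : boxA (1 - x) Y) (h' : boxC (x' - 1/2) (Y' - 3/2)) :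
    0.16 ≤ (x' - x)^2 + (Y' - Y)^2/3 := by
  obtain ⟨a1, a2, a3, a4⟩ := h
  obtain ⟨b1, b2, b3, b4⟩ := h'
  have := proj_sq (x - x') (Y' - Y) (by linarith)
  linarith [show (x - x')^2 = (x' - x)^2 by ring]

lemma no_mix {w x y z : ℂ} (hre : w.re = 1/2) (him : w.im^2 = 3/4) (h : NR w x y z) :
    ¬ (inA w x ∧ inA w y ∧ inB w z) ∧ ¬ (inA w x ∧ inA w y ∧ inC w z) ∧
    ¬ (inB w x ∧ inB w y ∧ inA w z) ∧ ¬ (inB w x ∧ inB w y ∧ inC w z) ∧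
    ¬ (inC w x ∧ inC w y ∧ inA w z) ∧ ¬ (inC w x ∧ inC w y ∧ inB w z) := by
  have H := far_near' hre him h
  unfold inA inB inC
  refine ⟨?_, ?_, ?_, ?_, ?_, ?_⟩ <;> rintro ⟨h1, h2, h3⟩
  · have := boxA_diam h1 h2; have := AB_far h1 h3; linarith
  · have := boxA_diam h1 h2; have := AC_far h1 h3; linarith
  · have := boxA_diam h1 h2; have := AB_far h3 h1; nlinarith
  · have := boxA_diam h1 h2; have := BC_far h1 h3; nlinarith
  · have := boxC_diam h1 h2; have := AC_far h3 h1; nlinarith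
  · have := boxC_diam h1 h2; have := BC_far h3 h1; nlinarith
open Finset
/-- weighted functional -/
def WF {α : Type*} [DecidableEq α] (G : Finset α → Prop) [DecidablePred G] (h : ℕ → ℕ)
    (V : Finset α) (w : α → ℕ) : ℕ :=
  ∑ S ∈ (V.powersetCard 3).filter G, ∏ x ∈ S, w x + ∑ x ∈ V, h (w x)

def Splits3 {α : Type*} [DecidableEq α] (G : Finset α → Prop) (V : Finset α) : Prop :=
  ∃ A B C : Finset α, A ∪ B ∪ C = V ∧ Disjoint A B ∧ Disjoint A C ∧ Disjoint B C ∧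
    A ≠ V ∧ B ≠ V ∧ C ≠ V ∧ ∀ S ⊆ V, S.card = 3 → G S → S ⊆ A ∨ S ⊆ B ∨ S ⊆ C ∨
      ∃ a ∈ A, ∃ b ∈ B, ∃ c ∈ C, S = {a, b, c}

lemma WF_split {α : Type*} [DecidableEq α] (G : Finset α → Prop) [DecidablePred G] (h : ℕ → ℕ)
    (V A B C : Finset α) (w : α → ℕ) (hV : A ∪ B ∪ C = V)
    (dAB : Disjoint A B) (dAC : Disjoint A C) (dBC : Disjoint B C)
    (hS : ∀ S ⊆ V, S.card = 3 → G S → S ⊆ A ∨ S ⊆ B ∨ S ⊆ C ∨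
      ∃ a ∈ A, ∃ b ∈ B, ∃ c ∈ C, S = {a, b, c}) :
    WF G h V w ≤ (∑ x ∈ A, w x) * (∑ x ∈ B, w x) * (∑ x ∈ C, w x)
      + WF G h A w + WF G h B w + WF G h C w := by
  have dABC : Disjoint (A ∪ B) C := disjoint_union_left.2 ⟨dAC, dBC⟩
  have h1 : ∑ x ∈ V, h (w x) = ∑ x ∈ A, h (w x) + ∑ x ∈ B, h (w x) + ∑ x ∈ C, h (w x) := by
    rw [← hV, sum_union dABC, sum_union dAB]
  let E := fun U : Finset α => (U.powersetCard 3).filter G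
  let X := (A ×ˢ B ×ˢ C).image (fun t => ({t.1, t.2.1, t.2.2} : Finset α))
  have hsub : E V ⊆ E A ∪ E B ∪ E C ∪ X := by
    intro S hs
    simp only [E, X, mem_filter, mem_powersetCard, mem_union, mem_image, mem_product] at hs ⊢
    obtain ⟨⟨s1, s2⟩, s3⟩ := hs
    rcases hS S s1 s2 s3 with k | k | k | ⟨a, ha, b, hb, c, hc, k⟩
    · exact Or.inl (Or.inl (Or.inl ⟨⟨k, s2⟩, s3⟩))
    · exact Or.inl (Or.inl (Or.inr ⟨⟨k, s2⟩, s3⟩))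
    · exact Or.inl (Or.inr ⟨⟨k, s2⟩, s3⟩)
    · exact Or.inr ⟨(a, b, c), ⟨ha, hb, hc⟩, k.symm⟩
  have hu : ∀ (s t : Finset (Finset α)) (f : Finset α → ℕ),
      ∑ x ∈ s ∪ t, f x ≤ ∑ x ∈ s, f x + ∑ x ∈ t, f x := by
    intro s t f
    rw [← sum_union_inter]; exact Nat.le_add_right _ _
  have hX : ∑ S ∈ X, ∏ x ∈ S, w x ≤ (∑ x ∈ A, w x) * (∑ x ∈ B, w x) * (∑ x ∈ C, w x) := by
    have : ∑ S ∈ X, ∏ x ∈ S, w x ≤ ∑ t ∈ A ×ˢ B ×ˢ C, ∏ x ∈ ({t.1, t.2.1, t.2.2} : Finset α), w x := by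
      refine sum_image_le_of_nonneg (fun _ _ => Nat.zero_le _)
    refine this.trans (le_of_eq ?_)
    rw [mul_assoc, sum_mul_sum B C, ← sum_product', sum_mul_sum, ← sum_product']
    apply sum_congr rfl
    rintro ⟨a, b, c⟩ ht
    simp only [mem_product] at ht
    obtain ⟨ha, hb, hc⟩ := ht
    have hab : a ≠ b := fun e => disjoint_left.1 dAB ha (e ▸ hb)
    have hac : a ≠ c := fun e => disjoint_left.1 dAC ha (e ▸ hc)
    have hbc : b ≠ c := fun e => disjoint_left.1 dBC hb (e ▸ hc)
    rw [prod_insert (by simp [hab, hac]), prod_insert (by simp [hbc]), prod_singleton]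
  have hE : ∑ S ∈ E V, ∏ x ∈ S, w x ≤ ∑ S ∈ E A, ∏ x ∈ S, w x + ∑ S ∈ E B, ∏ x ∈ S, w x
      + ∑ S ∈ E C, ∏ x ∈ S, w x + ∑ S ∈ X, ∏ x ∈ S, w x := by
    refine (sum_le_sum_of_subset hsub).trans ?_
    refine (hu _ _ _).trans ?_
    gcongr
    refine (hu _ _ _).trans ?_
    gcongr
    exact hu _ _ _
  simp only [E] at hE
  unfold WF
  rw [h1]
  omega

lemma WF_merge {α : Type*} [DecidableEq α] (G : Finset α → Prop) [DecidablePred G] (h : ℕ → ℕ)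
    (hsup : ∀ a b, h a + h b ≤ h (a + b))
    (V : Finset α) (w : α → ℕ) (x y : α) (hx : x ∈ V) (hy : y ∈ V) (hxy : x ≠ y)
    (hun : ∀ S ⊆ V, S.card = 3 → G S → ¬ (x ∈ S ∧ y ∈ S)) :
    ∃ x' ∈ V, ∃ w' : α → ℕ, ∑ z ∈ V.erase x', w' z = ∑ z ∈ V, w z ∧
      WF G h V w ≤ WF G h (V.erase x') w' := by
  let E := fun U : Finset α => (U.powersetCard 3).filter G
  let lk := fun u : α => ∑ S ∈ (E V).filter (fun S => u ∈ S), ∏ z ∈ S.erase u, w z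
  -- wlog
  have main : ∀ x y : α, x ∈ V → y ∈ V → x ≠ y → (∀ S ⊆ V, S.card = 3 → G S → ¬ (x ∈ S ∧ y ∈ S)) →
      lk y ≤ lk x → ∃ w' : α → ℕ, ∑ z ∈ V.erase y, w' z = ∑ z ∈ V, w z ∧
      WF G h V w ≤ WF G h (V.erase y) w' := by
    intro x y hx hy hxy hun hle
    let w' := Function.update w x (w x + w y)
    have hxe : x ∈ V.erase y := mem_erase.2 ⟨hxy, hx⟩
    have w'x : w' x = w x + w y := by simp [w']
    have w'o : ∀ z, z ≠ x → w' z = w z := fun z hz => by simp [w', hz]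
    have split : ∀ f : α → ℕ, ∑ z ∈ V, f z = f y + (f x + ∑ z ∈ (V.erase y).erase x, f z) := by
      intro f
      rw [add_sum_erase _ _ hxe, add_sum_erase _ _ hy]
    have split' : ∀ f : α → ℕ, ∑ z ∈ V.erase y, f z = (f x + ∑ z ∈ (V.erase y).erase x, f z) := by
      intro f
      rw [add_sum_erase _ _ hxe]
    have rest : ∀ f : ℕ → ℕ, ∑ z ∈ (V.erase y).erase x, f (w' z) = ∑ z ∈ (V.erase y).erase x, f (w z) := by
      intro f
      apply sum_congr rfl
      intro z hz
      rw [w'o z (ne_of_mem_erase hz)]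
    refine ⟨w', ?_, ?_⟩
    · rw [split, split', rest (fun n => n), w'x]; ring
    · -- edges
      let N := (E V).filter (fun S => x ∉ S ∧ y ∉ S)
      have hlk : ∀ u, ∑ S ∈ (E V).filter (fun S => u ∈ S), ∏ z ∈ S, w z = w u * lk u := by
        intro u
        simp only [lk, mul_sum]
        apply sum_congr rfl
        intro S hS
        rw [mul_prod_erase _ _ (mem_filter.1 hS).2]
      have e1 : ∑ S ∈ E V, ∏ z ∈ S, w z = w x * lk x + w y * lk y + ∑ S ∈ N, ∏ z ∈ S, w z := by
        rw [← hlk, ← hlk, ← sum_filter_add_sum_filter_not (E V) (fun S => x ∈ S), add_assoc]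
        congr 1
        rw [← sum_filter_add_sum_filter_not ((E V).filter (fun S => x ∉ S)) (fun S => y ∈ S)]
        congr 1
        · apply sum_congr _ (fun _ _ => rfl)
          ext S
          simp only [E, mem_filter, mem_powersetCard]
          constructor
          · tauto
          · rintro ⟨⟨⟨s1, s2⟩, s3⟩, s4⟩
            have := hun S s1 s2 s3
            tauto
        · apply sum_congr _ (fun _ _ => rfl)
          ext S
          simp only [N, mem_filter]
          tauto
      have e2 : ∑ S ∈ E (V.erase y), ∏ z ∈ S, w' z = (w x + w y) * lk x + ∑ S ∈ N, ∏ z ∈ S, w z := by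
        rw [← sum_filter_add_sum_filter_not (E (V.erase y)) (fun S => x ∈ S)]
        have memE : ∀ S, S ∈ E (V.erase y) ↔ S ∈ E V ∧ y ∉ S := by
          intro S
          simp only [E, mem_filter, mem_powersetCard, subset_erase]
          tauto
        congr 1
        · simp only [lk, mul_sum]
          apply sum_congr
          · ext S
            refine (mem_filter (s := E (V.erase y))).trans ?_
            refine Iff.trans ?_ (mem_filter (s := E V)).symm
            rw [memE]
            constructor
            · tauto
            · rintro ⟨s, s4⟩
              have s' := s
              simp only [E, mem_filter, mem_powersetCard] at s'
              have := hun S s'.1.1 s'.1.2 s'.2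
              tauto
          · intro S hS
            rw [← mul_prod_erase _ _ (mem_filter.1 hS).2, w'x]
            congr 1
            apply prod_congr rfl
            intro z hz
            rw [w'o z (ne_of_mem_erase hz)]
        · apply sum_congr
          · ext S
            refine (mem_filter (s := E (V.erase y))).trans ?_
            refine Iff.trans ?_ (mem_filter (s := E V)).symm
            rw [memE]
            tauto
          · intro S hS
            apply prod_congr rfl
            intro z hz
            rw [w'o z]
            intro e
            exact (mem_filter.1 hS).2.1 (e ▸ hz)
      unfold WF
      simp only [E] at e1 e2
      rw [e1, e2, split, split', rest h, w'x]
      have := hsup (w x) (w y)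
      have := Nat.mul_le_mul_left (w y) hle
      nlinarith
  rcases le_total (lk y) (lk x) with hle | hle
  · exact ⟨y, hy, main x y hx hy hxy hun hle⟩
  · exact ⟨x, hx, main y x hy hx hxy.symm (fun S a b c d => hun S a b c d.symm) hle⟩

theorem comb {α : Type*} [DecidableEq α] (G : Finset α → Prop) [DecidablePred G] (h : ℕ → ℕ)
    (h0 : h 0 = 0) (hsup : ∀ a b c, a * b * c + h a + h b + h c ≤ h (a + b + c))
    (hgeo : ∀ V : Finset α, 2 ≤ V.card →
      (∀ x ∈ V, ∀ y ∈ V, x ≠ y → ∃ S ⊆ V, S.card = 3 ∧ G S ∧ x ∈ S ∧ y ∈ S) → Splits3 G V) :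
    ∀ (n : ℕ) (V : Finset α) (w : α → ℕ), V.card = n → WF G h V w ≤ h (∑ x ∈ V, w x) := by
  intro n
  induction n using Nat.strong_induction_on with
  | _ n ih =>
  intro V w hV
  rcases Nat.lt_or_ge n 2 with hn | hn
  · have hE : (V.powersetCard 3) = ∅ := powersetCard_eq_empty.2 (by omega)
    unfold WF
    rw [hE]
    interval_cases n
    · rw [card_eq_zero.1 hV]; simp
    · obtain ⟨x, rfl⟩ := card_eq_one.1 hV; simp
  by_cases hcov : ∀ x ∈ V, ∀ y ∈ V, x ≠ y → ∃ S ⊆ V, S.card = 3 ∧ G S ∧ x ∈ S ∧ y ∈ S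
  · obtain ⟨A, B, C, hU, dAB, dAC, dBC, nA, nB, nC, hS⟩ := hgeo V (by omega) hcov
    have sA : A ⊂ V := Finset.ssubset_iff_subset_ne.2 ⟨by rw [← hU]; intro z; simp; tauto, nA⟩
    have sB : B ⊂ V := Finset.ssubset_iff_subset_ne.2 ⟨by rw [← hU]; intro z; simp; tauto, nB⟩
    have sC : C ⊂ V := Finset.ssubset_iff_subset_ne.2 ⟨by rw [← hU]; intro z; simp; tauto, nC⟩
    have iA := ih A.card (hV ▸ card_lt_card sA) A w rfl
    have iB := ih B.card (hV ▸ card_lt_card sB) B w rfl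
    have iC := ih C.card (hV ▸ card_lt_card sC) C w rfl
    have := WF_split G h V A B C w hU dAB dAC dBC hS
    have h3 := hsup (∑ x ∈ A, w x) (∑ x ∈ B, w x) (∑ x ∈ C, w x)
    have hs : ∑ x ∈ V, w x = (∑ x ∈ A, w x) + (∑ x ∈ B, w x) + (∑ x ∈ C, w x) := by
      rw [← hU, sum_union (disjoint_union_left.2 ⟨dAC, dBC⟩), sum_union dAB]
    rw [hs]
    omega
  · push Not at hcov
    obtain ⟨x, hx, y, hy, hxy, hun⟩ := hcov
    obtain ⟨x', hx', w', hw', hle⟩ := WF_merge G h (fun a b => by simpa [h0] using hsup a b 0) V w x y hx hy hxy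
      (fun S a b c d => hun S a b c d.1 d.2)
    have := ih (V.erase x').card (by rw [← hV]; exact card_erase_lt_of_mem hx') (V.erase x') w' rfl
    rw [hw'] at this
    exact hle.trans this


lemma NR_symm {w x y z : ℂ} (h : NR w x y z) : NR (1 - w) x y z := by
  rcases h with h | h
  · right; simpa using h
  · left; exact h

lemma NR_scale {w x y z a d : ℂ} (h : NR w x y z) :
    NR w ((x - a) / d) ((y - a) / d) ((z - a) / d) := by
  have key : ∀ v : ℂ, ‖z - x - v * (y - x)‖ ≤ 0.028 * ‖y - x‖ →
      ‖(z - a) / d - (x - a) / d - v * ((y - a) / d - (x - a) / d)‖ ≤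
        0.028 * ‖(y - a) / d - (x - a) / d‖ := by
    intro v h
    have e1 : (z - a) / d - (x - a) / d - v * ((y - a) / d - (x - a) / d)
      = (z - x - v * (y - x)) / d := by ring
    have e2 : (y - a) / d - (x - a) / d = (y - x) / d := by ring
    rw [e1, e2, norm_div, norm_div, mul_div_assoc']
    gcongr
  rcases h with h | h
  · exact Or.inl (key _ h)
  · exact Or.inr (key _ h)

lemma perm3 {α : Type*} [DecidableEq α] (x y z : α) :
    ({x, y, z} : Finset α) = {x, z, y} ∧ ({x, y, z} : Finset α) = {y, x, z} ∧
    ({x, y, z} : Finset α) = {y, z, x} ∧ ({x, y, z} : Finset α) = {z, x, y} ∧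
    ({x, y, z} : Finset α) = {z, y, x} := by
  refine ⟨?_, ?_, ?_, ?_, ?_⟩ <;> (ext; simp only [mem_insert, mem_singleton]; tauto)

/-- normalized version -/
lemma splits_norm {α : Type*} [DecidableEq α] (G : Finset α → Prop) (V : Finset α) (f : α → ℂ)
    (w : ℂ) (hre : w.re = 1/2) (him : w.im^2 = 3/4)
    (hcov : ∀ x ∈ V, ∀ y ∈ V, x ≠ y → ∃ S ⊆ V, S.card = 3 ∧ G S ∧ x ∈ S ∧ y ∈ S)
    (hG : ∀ S ⊆ V, S.card = 3 → G S → ∀ x ∈ S, ∀ y ∈ S, ∀ z ∈ S, x ≠ y → y ≠ z → x ≠ z →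
      NR w (f x) (f y) (f z))
    (hd : ∀ x ∈ V, ∀ y ∈ V, ‖f x - f y‖ ≤ 1)
    (a b c : α) (ha : a ∈ V) (hb : b ∈ V) (hc : c ∈ V) (fa : f a = 0) (fb : f b = 1)
    (fc : ‖f c - w‖ ≤ 0.028) : Splits3 G V := by
  classical
  have cov' : ∀ x ∈ V, ∀ y ∈ V, ∃ z ∈ V, NR w (f x) (f y) (f z) := by
    intro x hx y hy
    by_cases hxy : x = y
    · subst hxy; exact ⟨x, hx, Or.inl (by simp)⟩
    · obtain ⟨S, hS, S3, GS, xS, yS⟩ := hcov x hx y hy hxy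
      obtain ⟨z, zS, hz⟩ : ∃ z ∈ S, z ∉ ({x, y} : Finset α) := by
        apply exists_mem_notMem_of_card_lt_card
        have := card_le_two (a := x) (b := y)
        omega
      simp at hz
      exact ⟨z, hS zS, hG S hS S3 GS x xS y yS z zS hxy (Ne.symm hz.2) (Ne.symm hz.1)⟩
  have hcl : ∀ p ∈ V, inA w (f p) ∨ inB w (f p) ∨ inC w (f p) := by
    intro p hp
    obtain ⟨q1, hq1, r1⟩ := cov' a ha p hp
    obtain ⟨q2, hq2, r2⟩ := cov' b hb p hp
    obtain ⟨q3, hq3, r3⟩ := cov' c hc p hp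
    rw [fa] at r1
    rw [fb] at r2
    have d0 : ∀ x ∈ V, ‖f x‖ ≤ 1 := fun x hx => by simpa [fa] using hd x hx a ha
    have d1 : ∀ x ∈ V, ‖f x - 1‖ ≤ 1 := fun x hx => by simpa [fb] using hd x hx b hb
    exact cluster hre him fc (d0 p hp) (d1 p hp) (hd p hp c hc) (d1 _ hq1) (hd _ hq1 c hc)
      (d0 _ hq2) (hd _ hq2 c hc) (d0 _ hq3) (d1 _ hq3) r1 r2 r3
  have aA : inA w (f a) := by rw [fa]; unfold inA boxA; norm_num
  have bA : ¬ inA w (f b) := by rw [fb]; unfold inA boxA; norm_num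
  refine ⟨V.filter (fun p => inA w (f p)), V.filter (fun p => ¬ inA w (f p) ∧ inB w (f p)),
    V.filter (fun p => ¬ inA w (f p) ∧ ¬ inB w (f p)), ?_, ?_, ?_, ?_, ?_, ?_, ?_, ?_⟩
  · ext p; simp only [mem_union, mem_filter]; tauto
  · rw [disjoint_left]; intro p; simp only [mem_filter]; tauto
  · rw [disjoint_left]; intro p; simp only [mem_filter]; tauto
  · rw [disjoint_left]; intro p; simp only [mem_filter]; tauto
  · intro e; rw [← e] at hb; exact bA (mem_filter.1 hb).2
  · intro e; rw [← e] at ha; exact (mem_filter.1 ha).2.1 aA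
  · intro e; rw [← e] at ha; exact (mem_filter.1 ha).2.1 aA
  · intro S hS S3 GS
    have hN := hG S hS S3 GS
    obtain ⟨x, y, z, hxy, hxz, hyz, rfl⟩ := card_eq_three.1 S3
    have n1 := no_mix hre him (hN x (by simp) y (by simp) z (by simp) hxy hyz hxz)
    have n2 := no_mix hre him (hN y (by simp) z (by simp) x (by simp) hyz hxz.symm hxy.symm)
    have n3 := no_mix hre him (hN x (by simp) z (by simp) y (by simp) hxz hyz.symm hxy)
    have hx : x ∈ V := hS (by simp)
    have hy : y ∈ V := hS (by simp)
    have hz : z ∈ V := hS (by simp)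
    have cx := hcl x hx
    have cy := hcl y hy
    have cz := hcl z hz
    clear hN hG hcl hcov cov' hS GS S3
    have tri : ∀ p ∈ V, (inA w (f p) ∨ inB w (f p) ∨ inC w (f p)) →
        (p ∈ V.filter (fun p => inA w (f p)) ∧ inA w (f p)) ∨
        (p ∈ V.filter (fun p => ¬ inA w (f p) ∧ inB w (f p)) ∧ inB w (f p)) ∨
        (p ∈ V.filter (fun p => ¬ inA w (f p) ∧ ¬ inB w (f p)) ∧ inC w (f p)) := by
      intro p hp hh
      by_cases k1 : inA w (f p)
      · exact Or.inl ⟨mem_filter.2 ⟨hp, k1⟩, k1⟩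
      by_cases k2 : inB w (f p)
      · exact Or.inr (Or.inl ⟨mem_filter.2 ⟨hp, k1, k2⟩, k2⟩)
      · exact Or.inr (Or.inr ⟨mem_filter.2 ⟨hp, k1, k2⟩, (hh.resolve_left k1).resolve_left k2⟩)
    have tx := tri x hx cx
    have ty := tri y hy cy
    have tz := tri z hz cz
    clear tri cx cy cz
    generalize V.filter (fun p => inA w (f p)) = A at *
    generalize V.filter (fun p => ¬ inA w (f p) ∧ inB w (f p)) = B at *
    generalize V.filter (fun p => ¬ inA w (f p) ∧ ¬ inB w (f p)) = C at *
    obtain ⟨u1, u2, u3, u4, u5, u6⟩ := n1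
    obtain ⟨v1, v2, v3, v4, v5, v6⟩ := n2
    obtain ⟨t1, t2, t3, t4, t5, t6⟩ := n3
    obtain ⟨p1, p2, p3, p4, p5⟩ := perm3 x y z
    have sub : ∀ D : Finset α, x ∈ D → y ∈ D → z ∈ D → ({x, y, z} : Finset α) ⊆ D := by
      intro D h1 h2 h3
      simp [insert_subset_iff, h1, h2, h3]
    rcases tx with ⟨mx, ix⟩ | ⟨mx, ix⟩ | ⟨mx, ix⟩ <;>
    rcases ty with ⟨my, iy⟩ | ⟨my, iy⟩ | ⟨my, iy⟩ <;>
    rcases tz with ⟨mz, iz⟩ | ⟨mz, iz⟩ | ⟨mz, iz⟩ <;>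
    first
    | exact Or.inl (sub _ mx my mz)
    | exact Or.inr (Or.inl (sub _ mx my mz))
    | exact Or.inr (Or.inr (Or.inl (sub _ mx my mz)))
    | (exfalso; first
        | exact u1 ⟨ix, iy, iz⟩ | exact u2 ⟨ix, iy, iz⟩ | exact u3 ⟨ix, iy, iz⟩
        | exact u4 ⟨ix, iy, iz⟩ | exact u5 ⟨ix, iy, iz⟩ | exact u6 ⟨ix, iy, iz⟩
        | exact v1 ⟨iy, iz, ix⟩ | exact v2 ⟨iy, iz, ix⟩ | exact v3 ⟨iy, iz, ix⟩
        | exact v4 ⟨iy, iz, ix⟩ | exact v5 ⟨iy, iz, ix⟩ | exact v6 ⟨iy, iz, ix⟩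
        | exact t1 ⟨ix, iz, iy⟩ | exact t2 ⟨ix, iz, iy⟩ | exact t3 ⟨ix, iz, iy⟩
        | exact t4 ⟨ix, iz, iy⟩ | exact t5 ⟨ix, iz, iy⟩ | exact t6 ⟨ix, iz, iy⟩)
    | (right; right; right
       first
       | exact ⟨x, mx, y, my, z, mz, rfl⟩
       | exact ⟨x, mx, z, mz, y, my, p1⟩
       | exact ⟨y, my, x, mx, z, mz, p2⟩
       | exact ⟨y, my, z, mz, x, mx, p3⟩
       | exact ⟨z, mz, x, mx, y, my, p4⟩
       | exact ⟨z, mz, y, my, x, mx, p5⟩)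

lemma splits_of {α : Type*} [DecidableEq α] (G : Finset α → Prop) (V : Finset α) (f : α → ℂ)
    (finj : Function.Injective f) (hV : 2 ≤ V.card)
    (w : ℂ) (hre : w.re = 1/2) (him : w.im^2 = 3/4)
    (hcov : ∀ x ∈ V, ∀ y ∈ V, x ≠ y → ∃ S ⊆ V, S.card = 3 ∧ G S ∧ x ∈ S ∧ y ∈ S)
    (hG : ∀ S ⊆ V, S.card = 3 → G S → ∀ x ∈ S, ∀ y ∈ S, ∀ z ∈ S, x ≠ y → y ≠ z → x ≠ z →
      NR w (f x) (f y) (f z)) : Splits3 G V := by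
  obtain ⟨x0, hx0, y0, hy0, hxy0⟩ := one_lt_card.1 hV
  obtain ⟨⟨a, b⟩, hab, hmax⟩ := exists_max_image (V ×ˢ V) (fun t => ‖f t.1 - f t.2‖)
    ⟨(x0, y0), mem_product.2 ⟨hx0, hy0⟩⟩
  simp only [mem_product, Prod.forall] at hab hmax
  obtain ⟨ha, hb⟩ := hab
  have hpos : 0 < ‖f a - f b‖ := by
    refine lt_of_lt_of_le ?_ (hmax x0 y0 ⟨hx0, hy0⟩)
    rw [norm_pos_iff, sub_ne_zero]
    exact fun e => hxy0 (finj e)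
  have hne : a ≠ b := by rintro rfl; simp at hpos
  have hbd : f b - f a ≠ 0 := by
    intro e; rw [norm_sub_rev, e] at hpos; simp at hpos
  obtain ⟨S, hS, S3, GS, aS, bS⟩ := hcov a ha b hb hne
  obtain ⟨c, cS, hc⟩ : ∃ z ∈ S, z ∉ ({a, b} : Finset α) := by
    apply exists_mem_notMem_of_card_lt_card
    have := card_le_two (a := a) (b := b)
    omega
  simp at hc
  let g : α → ℂ := fun p => (f p - f a) / (f b - f a)
  have ga : g a = 0 := by simp [g]
  have gb : g b = 1 := by simp [g, hbd]
  have hd : ∀ x ∈ V, ∀ y ∈ V, ‖g x - g y‖ ≤ 1 := by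
    intro x hx y hy
    have : g x - g y = (f x - f y) / (f b - f a) := by simp only [g]; ring
    rw [this, norm_div, norm_sub_rev (f b)]
    exact (div_le_one hpos).2 (hmax x y ⟨hx, hy⟩)
  have hGg : ∀ S ⊆ V, S.card = 3 → G S → ∀ x ∈ S, ∀ y ∈ S, ∀ z ∈ S, x ≠ y → y ≠ z → x ≠ z →
      NR w (g x) (g y) (g z) := by
    intro S h1 h2 h3 x hx y hy z hz e1 e2 e3
    exact NR_scale (hG S h1 h2 h3 x hx y hy z hz e1 e2 e3)
  have hN := hGg S hS S3 GS a aS b bS c cS hne (Ne.symm hc.2) (Ne.symm hc.1)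
  rw [ga, gb] at hN
  rcases hN with hN | hN
  · exact splits_norm G V g w hre him hcov hGg hd a b c ha hb (hS cS) ga gb (by simpa using hN)
  · exact splits_norm G V g (1 - w) (by simp [hre]; norm_num) (by simpa using him) hcov
      (fun S h1 h2 h3 x hx y hy z hz e1 e2 e3 => NR_symm (hGg S h1 h2 h3 x hx y hy z hz e1 e2 e3))
      hd a b c ha hb (hS cS) ga gb (by simpa using hN)


def toC (p : Plane) : ℂ := ⟨p 0, p 1⟩

lemma toC_inj : Function.Injective toC := by
  intro p q h
  have h0 := congrArg Complex.re h
  have h1 := congrArg Complex.im h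
  ext i
  fin_cases i
  · exact h0
  · exact h1

def w0 : ℂ := ⟨1/2, √3/2⟩

lemma w0_re : w0.re = 1/2 := rfl
lemma w0_im : w0.im^2 = 3/4 := by
  show (√3/2)^2 = 3/4
  rw [div_pow, Real.sq_sqrt (by norm_num)]; norm_num

lemma sin_bounds {a b c : ℝ} (hs : a + b + c = Real.pi) (ha : |a - Real.pi/3| < Real.pi/180)
    (hb : |b - Real.pi/3| < Real.pi/180) (hc : |c - Real.pi/3| < Real.pi/180) {U W : ℝ}
    (hU : 0 ≤ U) (hW : 0 ≤ W) (hl : Real.sin c * W = Real.sin b * U) :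
    U^2 + W^2 - 2 * (U * W) * Real.cos (a - Real.pi/3) ≤ (0.028 * U)^2 := by
  have p1 := Real.pi_lt_d4
  have p2 := Real.pi_gt_d4
  rw [abs_lt] at ha hb hc
  have h1 : Real.sin b - Real.sin c = 2 * Real.sin ((b - c)/2) * Real.sin (a/2) := by
    rw [Real.sin_sub_sin, show (b + c)/2 = Real.pi/2 - a/2 by linarith, Real.cos_pi_div_two_sub]
  have lip : ∀ s t : ℝ, |Real.sin s - Real.sin t| ≤ |s - t| := by
    intro s t
    exact Real.abs_sin_sub_sin_le s t
  have h2 : |Real.sin ((b - c)/2)| ≤ 0.017454 := by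
    have := lip ((b-c)/2) 0
    simp only [Real.sin_zero, sub_zero] at this
    refine this.trans ?_
    rw [abs_le]; constructor <;> linarith
  have h3 : |Real.sin (a/2)| ≤ 0.50874 := by
    have := lip (a/2) (Real.pi/6)
    rw [Real.sin_pi_div_six] at this
    have k : |a/2 - Real.pi/6| ≤ 0.00873 := by
      rw [abs_le]; constructor <;> linarith
    have := abs_le.1 (this.trans k)
    rw [abs_le]; constructor <;> linarith
  have h4 : 0.848 ≤ Real.sin c := by
    have := lip c (Real.pi/3)
    rw [Real.sin_pi_div_three] at this
    have k : |c - Real.pi/3| ≤ 0.017454 := by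
      rw [abs_le]; constructor <;> linarith
    have := abs_le.1 (this.trans k)
    have s3 : 1.732 ≤ √3 := Real.le_sqrt_of_sq_le (by norm_num)
    linarith
  have h5 : |Real.sin b - Real.sin c| ≤ 0.01776 := by
    rw [h1, abs_mul, abs_mul, abs_two]
    have := mul_le_mul h2 h3 (abs_nonneg _) (by norm_num)
    linarith
  have h6 : |W - U| ≤ 0.02095 * U := by
    have e : Real.sin c * (W - U) = (Real.sin b - Real.sin c) * U := by linarith
    have e2 := congrArg abs e
    rw [abs_mul, abs_mul, abs_of_nonneg hU, abs_of_nonneg (by linarith : 0 ≤ Real.sin c)] at e2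
    have := mul_le_mul_of_nonneg_right h5 hU
    have := mul_le_mul_of_nonneg_right h4 (abs_nonneg (W - U))
    linarith
  have h7 : 1 - 0.000153 ≤ Real.cos (a - Real.pi/3) := by
    have := Real.one_sub_sq_div_two_le_cos (x := a - Real.pi/3)
    have k : (a - Real.pi/3)^2 ≤ 0.017454^2 := by apply sq_le_sq' <;> linarith
    linarith
  have h8 : (W - U)^2 ≤ (0.02095 * U)^2 := sq_le_sq' (by linarith [abs_le.1 h6]) (abs_le.1 h6).2
  have h9 : U * W ≤ 1.02095 * U^2 := by nlinarith [(abs_le.1 h6).2]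
  have h10 : 0 ≤ U * W := by positivity
  nlinarith [mul_le_mul_of_nonneg_left h7 h10]

lemma NR_of_angles {x y z : Plane} (hxy : x ≠ y) (ha : |∠ y x z - Real.pi/3| < Real.pi/180)
    (hb : |∠ x y z - Real.pi/3| < Real.pi/180) (hc : |∠ x z y - Real.pi/3| < Real.pi/180) :
    NR w0 (toC x) (toC y) (toC z) := by
  have hs : ∠ y x z + ∠ x y z + ∠ x z y = Real.pi := by
    have := angle_add_angle_add_angle_eq_pi z hxy
    rw [angle_comm x y z]
    linarith
  have hl := law_sin y z x
  rw [angle_comm y z x, dist_comm z x] at hl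
  have H := sin_bounds hs ha hb hc dist_nonneg dist_nonneg hl
  set U := dist x y with hU
  set W := dist x z with hW
  set a := ∠ y x z with haa
  have hnU : ‖toC y - toC x‖ = U := by
    rw [hU, dist_comm, EuclideanSpace.dist_eq, Complex.norm_eq_sqrt_sq_add_sq]
    simp [toC, Fin.sum_univ_two, Real.dist_eq, sq_abs]
  have hnW : ‖toC z - toC x‖ = W := by
    rw [hW, dist_comm, EuclideanSpace.dist_eq, Complex.norm_eq_sqrt_sq_add_sq]
    simp [toC, Fin.sum_univ_two, Real.dist_eq, sq_abs]
  have hin : (y 0 - x 0) * (z 0 - x 0) + (y 1 - x 1) * (z 1 - x 1) = U * W * Real.cos a := by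
    have := InnerProductGeometry.cos_angle_mul_norm_mul_norm (y - x) (z - x)
    rw [← dist_eq_norm, ← dist_eq_norm, dist_comm y, dist_comm z] at this
    have h2 : a = InnerProductGeometry.angle (y - x) (z - x) := rfl
    rw [h2, mul_comm (U * W), this]
    simp [PiLp.inner_apply, Fin.sum_univ_two]
    ring
  set u0 := y 0 - x 0
  set u1 := y 1 - x 1
  set v0 := z 0 - x 0
  set v1 := z 1 - x 1
  have eu : toC y - toC x = ⟨u0, u1⟩ := by apply Complex.ext <;> simp [toC, u0, u1]
  have ev : toC z - toC x = ⟨v0, v1⟩ := by apply Complex.ext <;> simp [toC, v0, v1]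
  have qU : u0^2 + u1^2 = U^2 := by
    rw [← hnU, eu, Complex.sq_norm, Complex.normSq_apply]; ring
  have qW : v0^2 + v1^2 = W^2 := by
    rw [← hnW, ev, Complex.sq_norm, Complex.normSq_apply]; ring
  have hJ : (u0 * v1 - u1 * v0)^2 = (U * W * Real.sin a)^2 := by
    have : (u0 * v1 - u1 * v0)^2 = (u0^2+u1^2)*(v0^2+v1^2) - (u0 * v0 + u1 * v1)^2 := by ring
    rw [this, hin, qU, qW, mul_pow _ (Real.sin a), Real.sin_sq]; ring
  have hcos : Real.cos (a - Real.pi/3) = Real.cos a / 2 + √3/2 * Real.sin a := by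
    rw [Real.cos_sub, Real.cos_pi_div_three, Real.sin_pi_div_three]; ring
  rw [hcos] at H
  have s3 : (√3)^2 = 3 := Real.sq_sqrt (by norm_num)
  have hUn : 0 ≤ U := dist_nonneg
  unfold NR
  rw [hnU, eu, ev]
  rcases sq_eq_sq_iff_eq_or_eq_neg.1 hJ with hJ | hJ
  · left
    apply le_of_sq_le_sq _ (by positivity)
    rw [Complex.sq_norm, Complex.normSq_apply]
    simp only [w0, Complex.sub_re, Complex.sub_im, Complex.mul_re, Complex.mul_im]
    have : (v0 - (1/2 * u0 - √3/2 * u1)) * (v0 - (1/2 * u0 - √3/2 * u1)) +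
      (v1 - (1/2 * u1 + √3/2 * u0)) * (v1 - (1/2 * u1 + √3/2 * u0)) =
      (v0^2 + v1^2) + (1/4 + (√3)^2/4) * (u0^2 + u1^2) - (u0 * v0 + u1 * v1) - √3 * (u0 * v1 - u1 * v0) := by ring
    rw [this, qU, qW, hin, hJ, s3]
    linarith
  · right
    apply le_of_sq_le_sq _ (by positivity)
    rw [Complex.sq_norm, Complex.normSq_apply]
    simp only [w0, Complex.sub_re, Complex.sub_im, Complex.mul_re, Complex.mul_im, Complex.one_re, Complex.one_im]
    have : (v0 - ((1 - 1/2) * u0 - (0 - √3/2) * u1)) * (v0 - ((1 - 1/2) * u0 - (0 - √3/2) * u1)) +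
      (v1 - ((1 - 1/2) * u1 + (0 - √3/2) * u0)) * (v1 - ((1 - 1/2) * u1 + (0 - √3/2) * u0)) =
      (v0^2 + v1^2) + (1/4 + (√3)^2/4) * (u0^2 + u1^2) - (u0 * v0 + u1 * v1) + √3 * (u0 * v1 - u1 * v0) := by ring
    rw [this, qU, qW, hin, hJ, s3]
    linarith

lemma NR_of_forms {T : Fin 3 → Plane} {ε : ℝ}
    (hT : ∀ i : Fin 3, |triAngle T i - Real.pi / 3| ≤ Real.pi / 180 / 2)
    (he : ε < Real.pi / 180 / 2) {S : Finset Plane} (hS : FormsSimilar ε T S)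
    {x y z : Plane} (hx : x ∈ S) (hy : y ∈ S) (hz : z ∈ S) (hxy : x ≠ y) (hyz : y ≠ z) (hxz : x ≠ z) :
    NR w0 (toC x) (toC y) (toC z) := by
  obtain ⟨p, hp, -, σ, hσ⟩ := hS
  have ang : ∀ i, |triAngle p i - Real.pi/3| < Real.pi/180 := by
    intro i
    have h1 := abs_lt.1 (hσ i)
    have h2 := abs_le.1 (hT (σ i))
    rw [abs_lt]; constructor <;> linarith
  have mem : ∀ q, q ∈ S → ∃ i, p i = q := by
    intro q hq
    have : q ∈ (S : Set Plane) := hq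
    rw [hp] at this
    exact this
  obtain ⟨i, rfl⟩ := mem x hx
  obtain ⟨j, rfl⟩ := mem y hy
  obtain ⟨k, rfl⟩ := mem z hz
  have a0 := ang 0
  have a1 := ang 1
  have a2 := ang 2
  simp only [triAngle, Fin.isValue, zero_add, show (1 : Fin 3) + 1 = 2 by rfl, show (1 : Fin 3) + 2 = 0 by rfl,
    show (2 : Fin 3) + 1 = 0 by rfl, show (2 : Fin 3) + 2 = 1 by rfl] at a0 a1 a2
  have b0 := a0
  have b1 := a1
  have b2 := a2
  rw [angle_comm] at b0 b1 b2
  fin_cases i <;> fin_cases j <;> fin_cases k <;> first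
    | exact absurd rfl hxy
    | exact absurd rfl hyz
    | exact absurd rfl hxz
    | (apply NR_of_angles hxy <;> assumption)

open Classical in
def EE {α : Type*} (G : Finset α → Prop) (P : Finset α) : Finset (Finset α) :=
  (P.powersetCard 3).filter G

lemma mem_EE {α : Type*} (G : Finset α → Prop) (P S : Finset α) :
    S ∈ EE G P ↔ S ⊆ P ∧ S.card = 3 ∧ G S := by
  simp only [EE, mem_filter, mem_powersetCard, and_assoc]

lemma simCount_eq (ε : ℝ) (T : Fin 3 → Plane) (P : Finset Plane) :
    simCount ε T P = (EE (FormsSimilar ε T) P).card := by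
  unfold simCount
  rw [← Set.ncard_coe_finset]
  congr 1
  ext S
  simp [mem_EE]

lemma count_lower {α : Type*} [DecidableEq α] (G : Finset α → Prop) (A B C : Finset α)
    (dAB : Disjoint A B) (dAC : Disjoint A C) (dBC : Disjoint B C)
    (hX : ∀ a ∈ A, ∀ b ∈ B, ∀ c ∈ C, G {a, b, c}) :
    A.card * B.card * C.card + (EE G A).card + (EE G B).card + (EE G C).card
      ≤ (EE G (A ∪ B ∪ C)).card := by
  let X := (A ×ˢ B ×ˢ C).image (fun t => ({t.1, t.2.1, t.2.2} : Finset α))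
  have ne : ∀ a ∈ A, ∀ b ∈ B, ∀ c ∈ C, a ≠ b ∧ a ≠ c ∧ b ≠ c := by
    intro a ha b hb c hc
    exact ⟨fun e => disjoint_left.1 dAB ha (e ▸ hb), fun e => disjoint_left.1 dAC ha (e ▸ hc),
      fun e => disjoint_left.1 dBC hb (e ▸ hc)⟩
  have cX : X.card = A.card * B.card * C.card := by
    rw [card_image_of_injOn, card_product, card_product, mul_assoc]
    rintro ⟨a, b, c⟩ h1 ⟨a', b', c'⟩ h2 e
    simp only [coe_product, Set.mem_prod, mem_coe] at h1 h2
    obtain ⟨ha, hb, hc⟩ := h1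
    obtain ⟨ha', hb', hc'⟩ := h2
    simp only at e ha hb hc ha' hb' hc'
    have e1 : a ∈ ({a', b', c'} : Finset α) := e ▸ (by simp)
    have e2 : b ∈ ({a', b', c'} : Finset α) := e ▸ (by simp)
    have e3 : c ∈ ({a', b', c'} : Finset α) := e ▸ (by simp)
    simp only [mem_insert, mem_singleton] at e1 e2 e3
    have m1 := ne a ha b' hb' c' hc'
    have m2 := ne a' ha' b hb c' hc'
    have m3 := ne a' ha' b' hb' c hc
    have r1 : a = a' := by tauto
    have r2 : b = b' := by
      rcases e2 with e | e | e
      · exact absurd e.symm m2.1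
      · exact e
      · exact absurd e m2.2.2
    have r3 : c = c' := by
      rcases e3 with e | e | e
      · exact absurd e.symm m3.2.1
      · exact absurd e.symm m3.2.2
      · exact e
    rw [r1, r2, r3]
  have dE : ∀ A B : Finset α, Disjoint A B → Disjoint (EE G A) (EE G B) := by
    intro A B d
    rw [disjoint_left]
    intro S h1 h2
    rw [mem_EE] at h1 h2
    obtain ⟨x, hx⟩ := card_pos.1 (by omega : 0 < S.card)
    exact disjoint_left.1 d (h1.1 hx) (h2.1 hx)
  have dX : ∀ D : Finset α, (∀ a ∈ A, ∀ b ∈ B, ∀ c ∈ C, ¬ (a ∈ D ∧ b ∈ D ∧ c ∈ D)) → Disjoint X (EE G D) := by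
    intro D hD
    rw [disjoint_left]
    intro S h1 h2
    rw [mem_EE] at h2
    obtain ⟨⟨a, b, c⟩, ht, rfl⟩ := mem_image.1 h1
    simp only [mem_product] at ht
    exact hD a ht.1 b ht.2.1 c ht.2.2 ⟨h2.1 (by simp), h2.1 (by simp), h2.1 (by simp)⟩
  have hsub : X ∪ EE G A ∪ EE G B ∪ EE G C ⊆ EE G (A ∪ B ∪ C) := by
    intro S hS
    simp only [mem_union] at hS
    rcases hS with ((h | h) | h) | h
    · obtain ⟨⟨a, b, c⟩, ht, rfl⟩ := mem_image.1 h
      simp only [mem_product] at ht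
      obtain ⟨ha, hb, hc⟩ := ht
      have n := ne a ha b hb c hc
      rw [mem_EE]
      refine ⟨?_, card_eq_three.2 ⟨a, b, c, n.1, n.2.1, n.2.2, rfl⟩, hX a ha b hb c hc⟩
      simp [insert_subset_iff, ha, hb, hc]
    all_goals
      rw [mem_EE] at h ⊢
      refine ⟨h.1.trans ?_, h.2⟩
      intro z hz
      simp [hz]
  have := card_le_card hsub
  rw [card_union_of_disjoint, card_union_of_disjoint, card_union_of_disjoint, cX] at this
  · exact this
  · apply dX
    rintro a ha b hb c hc ⟨-, h, -⟩
    exact disjoint_left.1 dAB h hb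
  · rw [disjoint_union_left]
    refine ⟨?_, dE _ _ dAB⟩
    apply dX
    rintro a ha b hb c hc ⟨h, -, -⟩
    exact disjoint_left.1 dAB ha h
  · rw [disjoint_union_left, disjoint_union_left]
    refine ⟨⟨?_, dE _ _ dAC⟩, dE _ _ dBC⟩
    apply dX
    rintro a ha b hb c hc ⟨h, -, -⟩
    exact disjoint_left.1 dAC ha h

def hom (v : Plane) (t : ℝ) : Plane →ᵃ[ℝ] Plane :=
  t • AffineMap.id ℝ Plane + AffineMap.const ℝ Plane v

lemma hom_apply (v : Plane) (t : ℝ) (x : Plane) : hom v t x = t • x + v := by simp [hom]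

lemma hom_inj (v : Plane) {t : ℝ} (ht : 0 < t) : Function.Injective (hom v t) := by
  intro x y h
  rw [hom_apply, hom_apply, add_left_inj] at h
  exact smul_right_injective _ ht.ne' h

lemma forms_hom {ε : ℝ} {T : Fin 3 → Plane} (v : Plane) {t : ℝ} (ht : 0 < t) {S : Finset Plane}
    (hS : FormsSimilar ε T S) : FormsSimilar ε T (S.image (hom v t)) := by
  obtain ⟨p, hp, htri, σ, hσ⟩ := hS
  refine ⟨hom v t ∘ p, ?_, ?_, σ, ?_⟩
  · rw [coe_image, hp, Set.range_comp]
  · unfold IsTriangle at htri ⊢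
    rw [← affineIndependent_iff_not_collinear] at htri ⊢
    exact htri.map' _ (hom_inj v ht)
  · intro i
    have : triAngle (hom v t ∘ p) i = triAngle p i := by
      unfold triAngle EuclideanGeometry.angle
      simp only [Function.comp, hom_apply, vsub_eq_sub, add_sub_add_right_eq_sub, ← smul_sub]
      rw [InnerProductGeometry.angle_smul_left_of_pos _ _ ht, InnerProductGeometry.angle_smul_right_of_pos _ _ ht]
    rw [this]
    exact hσ i

lemma count_hom (ε : ℝ) (T : Fin 3 → Plane) (v : Plane) {t : ℝ} (ht : 0 < t) (P : Finset Plane) :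
    (EE (FormsSimilar ε T) P).card ≤ (EE (FormsSimilar ε T) (P.image (hom v t))).card := by
  rw [← card_image_of_injective (EE (FormsSimilar ε T) P) (image_injective (hom_inj v ht))]
  apply card_le_card
  intro S hS
  obtain ⟨S', h', rfl⟩ := mem_image.1 hS
  rw [mem_EE] at h' ⊢
  refine ⟨image_subset_image h'.1, ?_, forms_hom v ht h'.2.2⟩
  rw [card_image_of_injective _ (hom_inj v ht)]
  exact h'.2.1

open Filter Topology in
lemma good_nhds (T : Fin 3 → Plane) (hT : IsTriangle T) (ε : ℝ) (hε : 0 < ε) :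
    ∀ᶠ p in 𝓝 T, IsTriangle p ∧ EpsSimilar ε p T := by
  have hT' := affineIndependent_iff_not_collinear.2 hT
  have inj := hT'.injective
  have h1 : ∀ᶠ p in 𝓝 T, IsTriangle p := by
    have := (isOpen_setOfPred_affineIndependent (𝕜 := ℝ) (E := Plane) (ι := Fin 3)).mem_nhds hT'
    filter_upwards [this] with p hp
    exact affineIndependent_iff_not_collinear.1 hp
  have h2 : ∀ i, ∀ᶠ p in 𝓝 T, |triAngle p i - triAngle T i| < ε := by
    intro i
    have hc : ContinuousAt (fun p : Fin 3 → Plane => triAngle p i) T := by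
      have h := EuclideanGeometry.continuousAt_angle (x := (T (i+1), T i, T (i+2)))
        (inj.ne (by fin_cases i <;> decide)) (inj.ne (by fin_cases i <;> decide))
      have h3 : ContinuousAt (fun p : Fin 3 → Plane => (p (i+1), p i, p (i+2))) T := by fun_prop
      exact ContinuousAt.comp (f := fun p : Fin 3 → Plane => (p (i+1), p i, p (i+2))) h h3
    have := Metric.tendsto_nhds.1 hc ε hε
    simpa [Real.dist_eq] using this
  filter_upwards [h1, eventually_all.2 h2] with p a b
  exact ⟨a, Equiv.refl _, b⟩

open Filter Topology in
lemma config_step (T : Fin 3 → Plane) (hT : IsTriangle T) (ε : ℝ) (hε : 0 < ε)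
    (A B C : Finset Plane) : ∃ P : Finset Plane, P.card = A.card + B.card + C.card ∧
      A.card * B.card * C.card + simCount ε T A + simCount ε T B + simCount ε T C ≤ simCount ε T P := by
  have inj := (affineIndependent_iff_not_collinear.2 hT).injective
  have tend : ∀ v x : Plane, Tendsto (fun t : ℝ => hom v t x) (𝓝[>] 0) (𝓝 v) := by
    intro v x
    simp only [hom_apply]
    have : Continuous (fun t : ℝ => t • x + v) := by fun_prop
    have := this.tendsto 0
    simp only [zero_smul, zero_add] at this
    exact this.mono_left nhdsWithin_le_nhds
  have dis : ∀ i j : Fin 3, i ≠ j → ∀ A B : Finset Plane, ∀ᶠ t in 𝓝[>] (0:ℝ),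
      Disjoint (A.image (hom (T i) t)) (B.image (hom (T j) t)) := by
    intro i j hij A B
    have : ∀ᶠ t in 𝓝[>] (0:ℝ), ∀ x ∈ A, ∀ y ∈ B, hom (T i) t x ≠ hom (T j) t y := by
      rw [eventually_all_finset]
      intro x _
      rw [eventually_all_finset]
      intro y _
      filter_upwards [((tend (T i) x).sub (tend (T j) y)).eventually_ne (sub_ne_zero.2 (inj.ne hij))] with t ht
      exact fun e => ht (sub_eq_zero.2 e)
    filter_upwards [this] with t ht
    rw [disjoint_left]
    intro z h1 h2
    obtain ⟨x, hx, rfl⟩ := mem_image.1 h1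
    obtain ⟨y, hy, e⟩ := mem_image.1 h2
    exact ht x hx y hy e.symm
  have good : ∀ᶠ t in 𝓝[>] (0:ℝ), ∀ x ∈ A, ∀ y ∈ B, ∀ z ∈ C,
      FormsSimilar ε T {hom (T 0) t x, hom (T 1) t y, hom (T 2) t z} := by
    rw [eventually_all_finset]
    intro x _
    rw [eventually_all_finset]
    intro y _
    rw [eventually_all_finset]
    intro z _
    have : Tendsto (fun t : ℝ => ![hom (T 0) t x, hom (T 1) t y, hom (T 2) t z]) (𝓝[>] 0) (𝓝 T) := by
      rw [tendsto_pi_nhds]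
      intro i
      fin_cases i
      · exact tend _ _
      · exact tend _ _
      · exact tend _ _
    filter_upwards [this.eventually (good_nhds T hT ε hε)] with t ht
    refine ⟨_, ?_, ht⟩
    ext q
    simp [Fin.exists_fin_succ, eq_comm]
    tauto
  obtain ⟨t, h01, h02, h12, hg, hpos⟩ := ((dis 0 1 (by decide) A B).and ((dis 0 2 (by decide) A C).and
    ((dis 1 2 (by decide) B C).and (good.and self_mem_nhdsWithin)))).exists
  have ht : (0:ℝ) < t := hpos
  refine ⟨A.image (hom (T 0) t) ∪ B.image (hom (T 1) t) ∪ C.image (hom (T 2) t), ?_, ?_⟩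
  · rw [card_union_of_disjoint (disjoint_union_left.2 ⟨h02, h12⟩), card_union_of_disjoint h01,
      card_image_of_injective _ (hom_inj _ ht), card_image_of_injective _ (hom_inj _ ht),
      card_image_of_injective _ (hom_inj _ ht)]
  · have := count_lower (FormsSimilar ε T) _ _ _ h01 h02 h12 (by
      intro a ha b hb c hc
      obtain ⟨x, hx, rfl⟩ := mem_image.1 ha
      obtain ⟨y, hy, rfl⟩ := mem_image.1 hb
      obtain ⟨z, hz, rfl⟩ := mem_image.1 hc
      exact hg x hx y hy z hz)
    rw [card_image_of_injective _ (hom_inj _ ht), card_image_of_injective _ (hom_inj _ ht),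
      card_image_of_injective _ (hom_inj _ ht)] at this
    have kA := count_hom ε T (T 0) ht A
    have kB := count_hom ε T (T 1) ht B
    have kC := count_hom ε T (T 2) ht C
    simp only [simCount_eq]
    omega

lemma exists_config (h : ℕ → ℕ) (hrec : HRec h) (T : Fin 3 → Plane) (hT : IsTriangle T) (ε : ℝ)
    (hε : 0 < ε) : ∀ n, ∃ P : Finset Plane, P.card = n ∧ h n ≤ simCount ε T P := by
  obtain ⟨h0, h1, h2, hr⟩ := hrec
  intro n
  induction n using Nat.strong_induction_on with
  | _ n ih =>
  rcases Nat.lt_or_ge n 3 with hn | hn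
  · obtain ⟨P, hP⟩ := Infinite.exists_subset_card_eq Plane n
    refine ⟨P, hP, ?_⟩
    interval_cases n <;> omega
  · obtain ⟨⟨a, b, c, hs, ha, hb, hc, e⟩, -⟩ := hr n hn
    obtain ⟨A, cA, eA⟩ := ih a (by omega)
    obtain ⟨B, cB, eB⟩ := ih b (by omega)
    obtain ⟨C, cC, eC⟩ := ih c (by omega)
    obtain ⟨P, cP, eP⟩ := config_step T hT ε hε A B C
    refine ⟨P, by omega, ?_⟩
    rw [cA, cB, cC] at eP
    omega

lemma h_sup (h : ℕ → ℕ) (hrec : HRec h) (a b c : ℕ) :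
    a * b * c + h a + h b + h c ≤ h (a + b + c) := by
  obtain ⟨h0, h1, h2, hr⟩ := hrec
  by_cases k : a = a + b + c
  · obtain rfl : b = 0 := by omega
    obtain rfl : c = 0 := by omega
    simp [h0]
  by_cases k : b = a + b + c
  · obtain rfl : a = 0 := by omega
    obtain rfl : c = 0 := by omega
    simp [h0]
  by_cases k : c = a + b + c
  · obtain rfl : a = 0 := by omega
    obtain rfl : b = 0 := by omega
    simp [h0]
  rcases Nat.lt_or_ge (a + b + c) 3 with hn | hn
  · have : a ≤ 1 := by omega
    have : b ≤ 1 := by omega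
    have : c ≤ 1 := by omega
    interval_cases a <;> interval_cases b <;> interval_cases c <;> simp_all
  · exact (hr _ hn).2 ⟨a, b, c, rfl, by omega, by omega, by omega, rfl⟩

lemma h_upper (h : ℕ → ℕ) (hrec : HRec h) : ∀ n, 24 * h n + n ≤ n^3 := by
  obtain ⟨h0, h1, h2, hr⟩ := hrec
  intro n
  induction n using Nat.strong_induction_on with
  | _ n ih =>
  rcases Nat.lt_or_ge n 3 with hn | hn
  · interval_cases n <;> simp [h0, h1, h2]
  · obtain ⟨⟨a, b, c, hs, ha, hb, hc, e⟩, -⟩ := hr n hn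
    have ea := ih a (by omega)
    have eb := ih b (by omega)
    have ec := ih c (by omega)
    rw [e, ← hs]
    zify at *
    nlinarith [mul_nonneg (Int.natCast_nonneg a) (sq_nonneg ((b:ℤ) - c)),
      mul_nonneg (Int.natCast_nonneg b) (sq_nonneg ((a:ℤ) - c)),
      mul_nonneg (Int.natCast_nonneg c) (sq_nonneg ((a:ℤ) - b))]

lemma h_pow (h : ℕ → ℕ) (hrec : HRec h) : ∀ k : ℕ, (3^k)^3 ≤ 24 * h (3^k) + 3^k := by
  intro k
  induction k with
  | zero => simp
  | succ k ih =>
    have := h_sup h hrec (3^k) (3^k) (3^k)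
    have e : 3^k + 3^k + 3^k = 3^(k+1) := by ring
    rw [e] at this
    rw [pow_succ 3 k] at this ⊢
    generalize 3^k = m at *
    nlinarith

lemma geo_upper (h : ℕ → ℕ) (hrec : HRec h) (T : Fin 3 → Plane)
    (hT : ∀ i : Fin 3, |triAngle T i - Real.pi / 3| ≤ Real.pi / 180 / 2) (ε : ℝ)
    (he : ε < Real.pi / 180 / 2) (P : Finset Plane) : simCount ε T P ≤ h P.card := by
  classical
  have := comb (FormsSimilar ε T) h hrec.1 (h_sup h hrec) (by
    intro V hV hcov
    exact splits_of _ V toC toC_inj hV w0 w0_re w0_im hcov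
      (fun S _ _ hG x hx y hy z hz e1 e2 e3 => NR_of_forms hT he hG hx hy hz e1 e2 e3))
    _ P (fun _ => 1) rfl
  simp only [WF, prod_const_one, sum_const, smul_eq_mul, mul_one] at this
  rw [simCount_eq]
  have e : EE (FormsSimilar ε T) P = filter (FormsSimilar ε T) (powersetCard 3 P) := by
    ext S; simp [mem_EE, and_assoc]
  rw [e]
  exact (Nat.le_add_right _ _).trans this

/-- There is `ε₀ ≥ π/180` such that: for every triangle `T` all of whose angles differ
from `π/3` by at most `ε₀/2`, and every `0 < ε < ε₀/2`, `h(n, T, ε) = h(n)` for all `n`;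
in particular `h(n, T, ε) = (n³ - n)/24` when `n` is a power of `3`. -/
theorem stmt_5 (h : ℕ → ℕ) (hrec : HRec h) :
    ∃ ε₀ : ℝ, Real.pi / 180 ≤ ε₀ ∧
      ∀ T : Fin 3 → Plane, IsTriangle T →
        (∀ i : Fin 3, |triAngle T i - Real.pi / 3| ≤ ε₀ / 2) →
        ∀ ε : ℝ, 0 < ε → ε < ε₀ / 2 →
          (∀ n : ℕ, hGeo n T ε = h n) ∧
          (∀ n : ℕ, (∃ k : ℕ, n = 3 ^ k) → 24 * hGeo n T ε = n ^ 3 - n) := by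
  refine ⟨Real.pi / 180, le_refl _, ?_⟩
  intro T hT hTa ε hε he
  have main : ∀ n : ℕ, hGeo n T ε = h n := by
    intro n
    obtain ⟨P, hP, hle⟩ := exists_config h hrec T hT ε hε n
    have ub : ∀ m ∈ {m | ∃ P : Finset Plane, P.card = n ∧ simCount ε T P = m}, m ≤ h n := by
      rintro m ⟨Q, hQ, rfl⟩
      rw [← hQ]
      exact geo_upper h hrec T hTa ε he Q
    apply le_antisymm
    · exact csSup_le ⟨_, P, hP, rfl⟩ ub
    · exact hle.trans (le_csSup ⟨h n, ub⟩ ⟨P, hP, rfl⟩)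
  refine ⟨main, ?_⟩
  rintro n ⟨k, rfl⟩
  rw [main]
  have h1 := h_upper h hrec (3^k)
  have h2 := h_pow h hrec k
  omega

end
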